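/- arXiv:2102.06148 — 12 statements merged into one kernel-verified Lean document; each statement's English description precedes it below -/
import Mathlib

section
/- (ConStR-bisimulation invariance) Let R be a ConStR-bisimulation in a concurrent game model M. Then for every ConStR-formula θ and every pair of states s1, s2 of M with s1 R s2: M, s1 ⊨ θ if and only if M, s2 ⊨ θ. -/
/-- A concurrent game model over a set of agents `Agt` and atomic propositions `Prp`.
The local outcome function is represented by a total function `out`; the semantics
only ever uses its values on action profiles that are available at the given state. -/
structure CGM (Agt Prp : Type) where
  State : Type
  state_ne : Nonempty State
  Act : Agt → Type
  act_ne : ∀ a, Nonempty (Act a)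
  avail : State → ∀ a, Set (Act a)
  avail_ne : ∀ s a, (avail s a).Nonempty
  out : State → (∀ a, Act a) → State
  val : Prp → Set State

namespace CGM

variable {Agt Prp : Type}

/-- `σ` represents a joint action of coalition `C` available at state `s`
(only the values of `σ` on `C` are relevant). -/
def JointAt (M : CGM Agt Prp) (C : Set Agt) (s : M.State)
    (σ : ∀ a, M.Act a) : Prop :=
  ∀ a ∈ C, σ a ∈ M.avail s a

/-- `Out[s, σ_C]`: outcomes of available action profiles at `s` extending `σ` on `C`. -/
def Outs (M : CGM Agt Prp) (s : M.State) (C : Set Agt)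
    (σ : ∀ a, M.Act a) : Set M.State :=
  { u | ∃ τ : ∀ a, M.Act a, (∀ a, τ a ∈ M.avail s a) ∧
        (∀ a ∈ C, τ a = σ a) ∧ M.out s τ = u }

/-- `Out[s, σ_A ⊎ σ_B]`: outcomes of available action profiles at `s` agreeing
with `σA` on `A` and with `σB` on `B \ A`. -/
def OutsAB (M : CGM Agt Prp) (s : M.State) (A B : Set Agt)
    (σA σB : ∀ a, M.Act a) : Set M.State :=
  { u | ∃ τ : ∀ a, M.Act a, (∀ a, τ a ∈ M.avail s a) ∧
        (∀ a ∈ A, τ a = σA a) ∧ (∀ a ∈ B \ A, τ a = σB a) ∧ M.out s τ = u }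

end CGM

/-- Formulas of the logic ConStR. -/
inductive ConStR (Agt Prp : Type) : Type where
  | atom : Prp → ConStR Agt Prp
  | tru  : ConStR Agt Prp
  | neg  : ConStR Agt Prp → ConStR Agt Prp
  | conj : ConStR Agt Prp → ConStR Agt Prp → ConStR Agt Prp
  | oc   : Set Agt → Set Agt → ConStR Agt Prp → ConStR Agt Prp → ConStR Agt Prp
  | oa   : Set Agt → Set Agt → ConStR Agt Prp → ConStR Agt Prp → ConStR Agt Prp
  | ob   : Set Agt → Set Agt → ConStR Agt Prp → ConStR Agt Prp → ConStR Agt Prp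

namespace CGM

variable {Agt Prp : Type}

/-- Truth of a ConStR-formula at a state of a concurrent game model. -/
def sat (M : CGM Agt Prp) : ConStR Agt Prp → M.State → Prop
  | .atom p, s => s ∈ M.val p
  | .tru, _ => True
  | .neg φ, s => ¬ M.sat φ s
  | .conj φ ψ, s => M.sat φ s ∧ M.sat ψ s
  | .oc A B φ ψ, s =>
      ∃ σA, M.JointAt A s σA ∧ (∀ u ∈ M.Outs s A σA, M.sat φ u) ∧
        ∃ σB, M.JointAt B s σB ∧ ∀ u ∈ M.OutsAB s A B σA σB, M.sat ψ u
  | .oa A B φ ψ, s =>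
      ∃ σB, M.JointAt B s σB ∧ ∀ σA, M.JointAt A s σA →
        (∀ u ∈ M.Outs s A σA, M.sat φ u) →
        ∀ u ∈ M.OutsAB s A B σA σB, M.sat ψ u
  | .ob A B φ ψ, s =>
      ∀ σA, M.JointAt A s σA → (∀ u ∈ M.Outs s A σA, M.sat φ u) →
        ∃ σB, M.JointAt B s σB ∧ ∀ u ∈ M.OutsAB s A B σA σB, M.sat ψ u

end CGM

namespace CGM

variable {Agt Prp : Type}

/-- The Forth half of the Oc-bisimulation condition (the Back half is the same
condition with `s1` and `s2` swapped). -/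
def OcForth (M : CGM Agt Prp) (R : M.State → M.State → Prop)
    (A B : Set Agt) (s1 s2 : M.State) : Prop :=
  ∀ σA1, M.JointAt A s1 σA1 → ∃ σA2, M.JointAt A s2 σA2 ∧
    (∀ u2 ∈ M.Outs s2 A σA2, ∃ u1 ∈ M.Outs s1 A σA1, R u1 u2) ∧
    (∀ σB1, M.JointAt B s1 σB1 → ∃ σB2, M.JointAt B s2 σB2 ∧
      ∀ u2 ∈ M.OutsAB s2 A B σA2 σB2, ∃ u1 ∈ M.OutsAB s1 A B σA1 σB1, R u1 u2)

/-- The Forth half of the Oα-bisimulation condition. -/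
def OaForth (M : CGM Agt Prp) (R : M.State → M.State → Prop)
    (A B : Set Agt) (s1 s2 : M.State) : Prop :=
  ∀ σB1, M.JointAt B s1 σB1 → ∃ σB2, M.JointAt B s2 σB2 ∧
    ∀ σA2, M.JointAt A s2 σA2 → ∃ σA1, M.JointAt A s1 σA1 ∧
      (∀ u1 ∈ M.Outs s1 A σA1, ∃ u2 ∈ M.Outs s2 A σA2, R u1 u2) ∧
      (∀ u2 ∈ M.OutsAB s2 A B σA2 σB2, ∃ u1 ∈ M.OutsAB s1 A B σA1 σB1, R u1 u2)

/-- The Forth half of the Oβ-bisimulation condition. -/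
def ObForth (M : CGM Agt Prp) (R : M.State → M.State → Prop)
    (A B : Set Agt) (s1 s2 : M.State) : Prop :=
  ∀ σA1, M.JointAt A s1 σA1 → ∃ σA2, M.JointAt A s2 σA2 ∧
    (∀ u2 ∈ M.Outs s2 A σA2, ∃ u1 ∈ M.Outs s1 A σA1, R u1 u2) ∧
    (∀ σB2, M.JointAt B s2 σB2 → ∃ σB1, M.JointAt B s1 σB1 ∧
      ∀ u1 ∈ M.OutsAB s1 A B σA1 σB1, ∃ u2 ∈ M.OutsAB s2 A B σA2 σB2, R u1 u2)

/-- A ConStR-bisimulation in a concurrent game model. -/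
def ConStRBisim (M : CGM Agt Prp) (R : M.State → M.State → Prop) : Prop :=
  ∀ s1 s2, R s1 s2 →
    (∀ p : Prp, s1 ∈ M.val p ↔ s2 ∈ M.val p) ∧
    ∀ A B : Set Agt,
      M.OcForth R A B s1 s2 ∧ M.OcForth R A B s2 s1 ∧
      M.OaForth R A B s1 s2 ∧ M.OaForth R A B s2 s1 ∧
      M.ObForth R A B s1 s2 ∧ M.ObForth R A B s2 s1

end CGM

namespace CGM

/-- Forth for `Oc` transfers `Oc`-formulas from `s1` to `s2`. -/
theorem sat_oc_of_forth {Agt Prp : Type} (M : CGM Agt Prp) (R : M.State → M.State → Prop)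
    (A B : Set Agt) (φ ψ : ConStR Agt Prp) (s1 s2 : M.State)
    (hφ : ∀ u v, R u v → (M.sat φ u ↔ M.sat φ v))
    (hψ : ∀ u v, R u v → (M.sat ψ u ↔ M.sat ψ v))
    (h : M.OcForth R A B s1 s2) (hs : M.sat (.oc A B φ ψ) s1) :
    M.sat (.oc A B φ ψ) s2 := by
  simp only [sat] at hs ⊢
  obtain ⟨σA, hA, h1, σB, hB, h2⟩ := hs
  obtain ⟨σA2, hA2, k1, k2⟩ := h σA hA
  obtain ⟨σB2, hB2, k3⟩ := k2 σB hB
  refine ⟨σA2, hA2, fun u hu => ?_, σB2, hB2, fun u hu => ?_⟩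
  · obtain ⟨v, hv, r⟩ := k1 u hu
    exact (hφ v u r).1 (h1 v hv)
  · obtain ⟨v, hv, r⟩ := k3 u hu
    exact (hψ v u r).1 (h2 v hv)

/-- Forth for `Oα` transfers `Oα`-formulas from `s1` to `s2`. -/
theorem sat_oa_of_forth {Agt Prp : Type} (M : CGM Agt Prp) (R : M.State → M.State → Prop)
    (A B : Set Agt) (φ ψ : ConStR Agt Prp) (s1 s2 : M.State)
    (hφ : ∀ u v, R u v → (M.sat φ u ↔ M.sat φ v))
    (hψ : ∀ u v, R u v → (M.sat ψ u ↔ M.sat ψ v))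
    (h : M.OaForth R A B s1 s2) (hs : M.sat (.oa A B φ ψ) s1) :
    M.sat (.oa A B φ ψ) s2 := by
  simp only [sat] at hs ⊢
  obtain ⟨σB, hB, h2⟩ := hs
  obtain ⟨σB2, hB2, k⟩ := h σB hB
  refine ⟨σB2, hB2, fun σA2 hA2 hp u hu => ?_⟩
  obtain ⟨σA, hA, k1, k2⟩ := k σA2 hA2
  obtain ⟨v, hv, r⟩ := k2 u hu
  refine (hψ v u r).1 (h2 σA hA (fun w hw => ?_) v hv)
  obtain ⟨x, hx, r'⟩ := k1 w hw
  exact (hφ w x r').2 (hp x hx)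

/-- Forth for `Oβ` transfers `Oβ`-formulas from `s2` to `s1`. -/
theorem sat_ob_of_forth {Agt Prp : Type} (M : CGM Agt Prp) (R : M.State → M.State → Prop)
    (A B : Set Agt) (φ ψ : ConStR Agt Prp) (s1 s2 : M.State)
    (hφ : ∀ u v, R u v → (M.sat φ u ↔ M.sat φ v))
    (hψ : ∀ u v, R u v → (M.sat ψ u ↔ M.sat ψ v))
    (h : M.ObForth R A B s1 s2) (hs : M.sat (.ob A B φ ψ) s2) :
    M.sat (.ob A B φ ψ) s1 := by
  simp only [sat] at hs ⊢
  intro σA hA hp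
  obtain ⟨σA2, hA2, k1, k2⟩ := h σA hA
  obtain ⟨σB2, hB2, h2⟩ := hs σA2 hA2 (fun u hu => by
    obtain ⟨v, hv, r⟩ := k1 u hu
    exact (hφ v u r).1 (hp v hv))
  obtain ⟨σB, hB, k3⟩ := k2 σB2 hB2
  refine ⟨σB, hB, fun u hu => ?_⟩
  obtain ⟨v, hv, r⟩ := k3 u hu
  exact (hψ u v r).2 (h2 v hv)

end CGM

/-- **ConStR-bisimulation invariance.** If `R` is a ConStR-bisimulation in a
concurrent game model `M`, then any two `R`-related states satisfy exactly
the same ConStR-formulas. -/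
theorem constr_bisimulation_invariance {Agt Prp : Type} [Finite Agt]
    (M : CGM Agt Prp) (R : M.State → M.State → Prop)
    (hR : M.ConStRBisim R) (θ : ConStR Agt Prp) (s1 s2 : M.State)
    (h12 : R s1 s2) :
    M.sat θ s1 ↔ M.sat θ s2 := by
  induction θ generalizing s1 s2 with
  | atom p => simpa only [CGM.sat] using (hR s1 s2 h12).1 p
  | tru => simp only [CGM.sat]
  | neg φ ih => simpa only [CGM.sat] using not_congr (ih s1 s2 h12)
  | conj φ ψ ih1 ih2 =>
    simpa only [CGM.sat] using and_congr (ih1 s1 s2 h12) (ih2 s1 s2 h12)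
  | oc A B φ ψ ih1 ih2 =>
    obtain ⟨h1, h2, -⟩ := (hR s1 s2 h12).2 A B
    exact ⟨M.sat_oc_of_forth R A B φ ψ s1 s2 ih1 ih2 h1,
      M.sat_oc_of_forth R A B φ ψ s2 s1 ih1 ih2 h2⟩
  | oa A B φ ψ ih1 ih2 =>
    obtain ⟨-, -, h1, h2, -⟩ := (hR s1 s2 h12).2 A B
    exact ⟨M.sat_oa_of_forth R A B φ ψ s1 s2 ih1 ih2 h1,
      M.sat_oa_of_forth R A B φ ψ s2 s1 ih1 ih2 h2⟩
  | ob A B φ ψ ih1 ih2 =>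
    obtain ⟨-, -, -, -, h1, h2⟩ := (hR s1 s2 h12).2 A B
    exact ⟨M.sat_ob_of_forth R A B φ ψ s2 s1 ih1 ih2 h2,
      M.sat_ob_of_forth R A B φ ψ s1 s2 ih1 ih2 h1⟩
end

section
/- (Oβ and Oα are semantically different) Let Agt contain two distinct agents a, b and let p, q be distinct atomic propositions. Then there exist a concurrent game model M over Agt and a state s0 of M such that M, s0 ⊨ Oβ({a};{b})(p▷q) but M, s0 ⊭ Oα({a};{b})(p▷q). Hence Oβ({a};{b})(p▷q) is not logically equivalent to Oα({a};{b})(p▷q). -/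
/-- **Oβ and Oα are semantically different.** There is a model and a state
satisfying `Oβ({a};{b})(p▷q)` but not `Oα({a};{b})(p▷q)`; hence the two
formulas are not logically equivalent. -/
theorem obeta_oalpha_semantically_different {Agt Prp : Type} [Finite Agt]
    (a b : Agt) (hab : a ≠ b) (p q : Prp) (hpq : p ≠ q) :
    (∃ (M : CGM Agt Prp) (s0 : M.State),
        M.sat (.ob {a} {b} (.atom p) (.atom q)) s0 ∧
        ¬ M.sat (.oa {a} {b} (.atom p) (.atom q)) s0) ∧
    ¬ (∀ (M : CGM Agt Prp) (s : M.State),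
        M.sat (.ob {a} {b} (.atom p) (.atom q)) s ↔
        M.sat (.oa {a} {b} (.atom p) (.atom q)) s) := by 
  classical
  have key : ∃ (M : CGM Agt Prp) (s0 : M.State),
        M.sat (.ob {a} {b} (.atom p) (.atom q)) s0 ∧
        ¬ M.sat (.oa {a} {b} (.atom p) (.atom q)) s0 := by
    -- matching pennies: `q` holds exactly when `a` and `b` choose the same action
    let M : CGM Agt Prp :=
      { State := Bool
        state_ne := ⟨true⟩
        Act := fun _ => Bool
        act_ne := fun _ => ⟨true⟩
        avail := fun _ _ => Set.univ
        avail_ne := fun _ _ => ⟨true, trivial⟩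
        out := fun _ τ => τ a == τ b
        val := fun r => {s | r = p ∨ s = true} }
    refine ⟨M, true, ?_, ?_⟩
    · intro σA _ _
      refine ⟨fun _ => σA a, fun _ _ => trivial, ?_⟩
      rintro u ⟨τ, -, h1, h2, rfl⟩
      have e1 : τ a = σA a := h1 a rfl
      have e2 : τ b = σA a := h2 b ⟨rfl, fun h => hab h.symm⟩
      exact Or.inr (beq_iff_eq.mpr (e1.trans e2.symm))
    · rintro ⟨σB, -, h⟩
      let c : Bool := σB b
      have h3 := h (fun _ => !c) (fun _ _ => trivial) (fun _ _ => Or.inl rfl) ((!c) == c)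
        ⟨fun x => if x = a then !c else c, fun _ => trivial, ?_, ?_, ?_⟩
      · rcases h3 with h3 | h3
        · exact hpq h3.symm
        · revert h3
          cases c <;> decide
      · intro x hx
        exact if_pos hx
      · rintro x ⟨hx, hxa⟩
        cases hx
        exact if_neg hxa
      · change ((if a = a then !c else c) == (if b = a then !c else c)) = _
        rw [if_pos rfl, if_neg hab.symm]
  refine ⟨key, fun hall => ?_⟩
  obtain ⟨M, s, h1, h2⟩ := key
  exact h2 ((hall M s).mp h1)
end

section
/- (Oc is not definable in Coalition Logic) Let Agt contain three distinct agents a, b, c and let p, q be distinct atomic propositions. Then there is no CL-formula χ such that for every concurrent game model M over Agt and every state s of M: M, s ⊨ χ if and only if M, s ⊨ Oc({a};{b})(p▷q). In particular, there exist a concurrent game model and two CL-bisimilar states of it such that Oc({a};{b})(p▷q) is true at one and false at the other. -/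
/-- Formulas of Coalition Logic CL. -/
inductive CLForm (Agt Prp : Type) : Type where
  | atom : Prp → CLForm Agt Prp
  | tru  : CLForm Agt Prp
  | neg  : CLForm Agt Prp → CLForm Agt Prp
  | conj : CLForm Agt Prp → CLForm Agt Prp → CLForm Agt Prp
  | coal : Set Agt → CLForm Agt Prp → CLForm Agt Prp

namespace CGM

variable {Agt Prp : Type}

/-- Truth of a CL-formula at a state of a concurrent game model. -/
def satCL (M : CGM Agt Prp) : CLForm Agt Prp → M.State → Prop
  | .atom p, s => s ∈ M.val p
  | .tru, _ => True
  | .neg φ, s => ¬ M.satCL φ s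
  | .conj φ ψ, s => M.satCL φ s ∧ M.satCL ψ s
  | .coal C φ, s => ∃ σ, M.JointAt C s σ ∧ ∀ u ∈ M.Outs s C σ, M.satCL φ u

/-- A CL-bisimulation in a concurrent game model. -/
def CLBisim (M : CGM Agt Prp) (R : M.State → M.State → Prop) : Prop :=
  ∀ s1 s2, R s1 s2 →
    (∀ p : Prp, s1 ∈ M.val p ↔ s2 ∈ M.val p) ∧
    ∀ C : Set Agt,
      (∀ σ1, M.JointAt C s1 σ1 → ∃ σ2, M.JointAt C s2 σ2 ∧
        ∀ u2 ∈ M.Outs s2 C σ2, ∃ u1 ∈ M.Outs s1 C σ1, R u1 u2) ∧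
      (∀ σ2, M.JointAt C s2 σ2 → ∃ σ1, M.JointAt C s1 σ1 ∧
        ∀ u1 ∈ M.Outs s1 C σ1, ∃ u2 ∈ M.Outs s2 C σ2, R u2 u1)

end CGM

namespace OcProof

/-- States: 0 and 1 are the two roots; 2 is `p ∧ q`, 3 is `p ∧ ¬ q`, 4 is `¬ p ∧ ¬ q`. -/
def F (s : Fin 5) (i j : Fin 3) : Fin 5 :=
  if s = 0 then (if i = 0 then (if j = 0 then 2 else 3) else if i = 1 then 3 else 4)
  else if s = 1 then (if i = 0 then (if j = 0 then 2 else 4) else if i = 1 then 3 else 4)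
  else s

def R (s t : Fin 5) : Prop := s = t ∨ (s.val < 2 ∧ t.val < 2)

instance : DecidableRel R := fun s t => by unfold R; infer_instance

theorem R_symm {s t : Fin 5} (h : R s t) : R t s := by
  rcases h with h | h
  · exact Or.inl h.symm
  · exact Or.inr h.symm

theorem sim1 : ∀ s t, R s t → ∀ i j, ∃ i' j', F t i' j' = F s i j := by decide
theorem sim2 : ∀ s t, R s t → ∀ i, ∃ i', ∀ j', ∃ j, F t i' j' = F s i j := by decide
theorem sim3 : ∀ s t, R s t → ∀ j, ∃ j', ∀ i', ∃ i, F t i' j' = F s i j := by decide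
theorem sim4 : ∀ s t, R s t → ∀ i' j', ∃ i j, F t i' j' = F s i j := by decide

def Mod {Agt Prp : Type} (a b : Agt) (p q : Prp) : CGM Agt Prp where
  State := Fin 5
  state_ne := ⟨0⟩
  Act := fun _ => Fin 3
  act_ne := fun _ => ⟨0⟩
  avail := fun _ _ => Set.univ
  avail_ne := fun _ _ => ⟨0, trivial⟩
  out := fun s τ => F s (τ a) (τ b)
  val := fun r => {u | (r = p ∧ (u = 2 ∨ u = 3)) ∨ (r = q ∧ u = 2)}

open Classical in
/-- A profile with prescribed values at `a`, `b`, and given values elsewhere. -/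
noncomputable def upd {Agt : Type} (a b : Agt) (σ : Agt → Fin 3) (i j : Fin 3) : Agt → Fin 3 :=
  fun d => if d = a then i else if d = b then j else σ d

theorem upd_a {Agt : Type} (a b : Agt) (σ : Agt → Fin 3) (i j : Fin 3) :
    upd a b σ i j a = i := by simp [upd]

theorem upd_b {Agt : Type} (a b : Agt) (hab : a ≠ b) (σ : Agt → Fin 3) (i j : Fin 3) :
    upd a b σ i j b = j := by simp [upd, hab.symm]

theorem upd_agree {Agt : Type} (a b : Agt) (σ : Agt → Fin 3) (i j : Fin 3) (C : Set Agt)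
    (ha : a ∈ C → i = σ a) (hb : b ∈ C → j = σ b) :
    ∀ d ∈ C, upd a b σ i j d = σ d := by
  intro d hd
  unfold upd
  split_ifs with h1 h2
  · subst h1; exact ha hd
  · subst h2; exact hb hd
  · rfl

theorem forth {Agt : Type} (a b : Agt) (hab : a ≠ b) (s t : Fin 5) (h : R s t) (C : Set Agt)
    (σ : Agt → Fin 3) :
    ∃ σ' : Agt → Fin 3, ∀ τ' : Agt → Fin 3, (∀ d ∈ C, τ' d = σ' d) →
      ∃ τ : Agt → Fin 3, (∀ d ∈ C, τ d = σ d) ∧ F t (τ' a) (τ' b) = F s (τ a) (τ b) := by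
  by_cases ha : a ∈ C <;> by_cases hb : b ∈ C
  · obtain ⟨i, j, e⟩ := sim1 s t h (σ a) (σ b)
    refine ⟨upd a b σ i j, fun τ' h' => ⟨σ, fun _ _ => rfl, ?_⟩⟩
    rw [h' a ha, h' b hb, upd_a, upd_b a b hab, e]
  · obtain ⟨i, e⟩ := sim2 s t h (σ a)
    refine ⟨upd a b σ i 0, fun τ' h' => ?_⟩
    obtain ⟨j, e⟩ := e (τ' b)
    refine ⟨upd a b σ (σ a) j, upd_agree a b σ _ _ C (fun _ => rfl) (fun x => absurd x hb), ?_⟩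
    rw [h' a ha, upd_a, upd_a, upd_b a b hab, e]
  · obtain ⟨j, e⟩ := sim3 s t h (σ b)
    refine ⟨upd a b σ 0 j, fun τ' h' => ?_⟩
    obtain ⟨i, e⟩ := e (τ' a)
    refine ⟨upd a b σ i (σ b), upd_agree a b σ _ _ C (fun x => absurd x ha) (fun _ => rfl), ?_⟩
    rw [h' b hb, upd_a, upd_b a b hab, upd_b a b hab, e]
  · refine ⟨σ, fun τ' _ => ?_⟩
    obtain ⟨i, j, e⟩ := sim4 s t h (τ' a) (τ' b)
    refine ⟨upd a b σ i j, upd_agree a b σ _ _ C (fun x => absurd x ha) (fun x => absurd x hb), ?_⟩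
    rw [upd_a, upd_b a b hab, e]

theorem forthM {Agt Prp : Type} (a b : Agt) (hab : a ≠ b) (p q : Prp) (s t : Fin 5) (h : R s t)
    (C : Set Agt) (σ : Agt → Fin 3) :
    ∃ σ' : Agt → Fin 3, (Mod a b p q).JointAt C t σ' ∧
      ∀ u ∈ (Mod a b p q).Outs t C σ', u ∈ (Mod a b p q).Outs s C σ := by
  obtain ⟨σ', hσ⟩ := forth a b hab s t h C σ
  refine ⟨σ', fun _ _ => trivial, ?_⟩
  rintro u ⟨τ', -, h', rfl⟩
  obtain ⟨τ, h1, h2⟩ := hσ τ' h'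
  exact ⟨τ, fun _ => trivial, h1, h2.symm⟩

theorem val_R {Agt Prp : Type} (a b : Agt) (p q : Prp) (s t : Fin 5) (h : R s t) (r : Prp) :
    s ∈ (Mod a b p q).val r ↔ t ∈ (Mod a b p q).val r := by
  have h2 : ∀ s t, R s t → (s = 2 ↔ t = 2) := by decide
  have h3 : ∀ s t, R s t → (s = 3 ↔ t = 3) := by decide
  change (r = p ∧ (s = 2 ∨ s = 3)) ∨ (r = q ∧ s = 2) ↔ (r = p ∧ (t = 2 ∨ t = 3)) ∨ (r = q ∧ t = 2)
  rw [h2 s t h, h3 s t h]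

theorem bisim {Agt Prp : Type} (a b : Agt) (hab : a ≠ b) (p q : Prp) :
    (Mod a b p q).CLBisim R := by
  intro s t h
  refine ⟨val_R a b p q s t h, fun C => ⟨fun σ _ => ?_, fun σ _ => ?_⟩⟩
  · obtain ⟨σ', h1, h2⟩ := forthM a b hab p q s t h C σ
    exact ⟨σ', h1, fun u hu => ⟨u, h2 u hu, Or.inl rfl⟩⟩
  · obtain ⟨σ', h1, h2⟩ := forthM a b hab p q t s (R_symm h) C σ
    exact ⟨σ', h1, fun u hu => ⟨u, h2 u hu, Or.inl rfl⟩⟩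

theorem inv {Agt Prp : Type} (a b : Agt) (hab : a ≠ b) (p q : Prp) (χ : CLForm Agt Prp) :
    ∀ s t : Fin 5, R s t → ((Mod a b p q).satCL χ s ↔ (Mod a b p q).satCL χ t) := by
  have key : ∀ C (φ : CLForm Agt Prp) (s t : Fin 5), R s t →
      (Mod a b p q).satCL (.coal C φ) s → (Mod a b p q).satCL (.coal C φ) t := by
    rintro C φ s t h ⟨σ, -, h2⟩
    obtain ⟨σ', h3, h4⟩ := forthM a b hab p q s t h C σ
    exact ⟨σ', h3, fun u hu => h2 u (h4 u hu)⟩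
  induction χ with
  | atom r => exact fun s t h => val_R a b p q s t h r
  | tru => exact fun _ _ _ => Iff.rfl
  | neg φ ih => exact fun s t h => not_congr (ih s t h)
  | conj φ ψ ih1 ih2 => exact fun s t h => and_congr (ih1 s t h) (ih2 s t h)
  | coal C φ _ => exact fun s t h => ⟨key C φ s t h, key C φ t s (R_symm h)⟩

theorem oc_true {Agt Prp : Type} (a b : Agt) (hab : a ≠ b) (p q : Prp) :
    (Mod a b p q).sat (.oc {a} {b} (.atom p) (.atom q)) (0 : Fin 5) := by
  refine ⟨fun _ => (0 : Fin 3), fun _ _ => trivial, ?_, fun _ => (0 : Fin 3),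
    fun _ _ => trivial, ?_⟩
  · rintro u ⟨τ, -, h, rfl⟩
    have h0 : τ a = (0 : Fin 3) := h a rfl
    have e : ∀ j, F 0 0 j = 2 ∨ F 0 0 j = 3 := by decide
    refine Or.inl ⟨rfl, ?_⟩
    change F 0 (τ a) (τ b) = 2 ∨ F 0 (τ a) (τ b) = 3
    rw [h0]; exact e _
  · rintro u ⟨τ, -, h, h', rfl⟩
    have h0 : τ a = (0 : Fin 3) := h a rfl
    have h1 : τ b = (0 : Fin 3) := h' b ⟨rfl, fun x => hab x.symm⟩
    refine Or.inr ⟨rfl, ?_⟩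
    change F 0 (τ a) (τ b) = 2
    rw [h0, h1]; rfl

theorem oc_false {Agt Prp : Type} (a b : Agt) (hab : a ≠ b) (p q : Prp) (hpq : p ≠ q) :
    ¬ (Mod a b p q).sat (.oc {a} {b} (.atom p) (.atom q)) (1 : Fin 5) := by
  rintro ⟨σ, -, hp, σ', -, hq⟩
  have e : ∀ i j, (∀ k, F 1 i k = 2 ∨ F 1 i k = 3) → F 1 i j ≠ 2 := by decide
  refine e (σ a) (σ' b) (fun k => ?_) ?_
  · have := hp (F 1 (σ a) k) ⟨upd a b σ (σ a) k, fun _ => trivial, ?_, ?_⟩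
    · rcases this with h | h
      · exact h.2
      · exact Or.inl h.2
    · rintro d rfl; exact upd_a d b σ _ _
    · exact congrArg₂ (F 1) (upd_a a b σ _ _) (upd_b a b hab σ _ _)
  · have := hq (F 1 (σ a) (σ' b)) ⟨upd a b σ (σ a) (σ' b), fun _ => trivial, ?_, ?_, ?_⟩
    · rcases this with h | h
      · exact absurd h.1.symm hpq
      · exact h.2
    · rintro d rfl; exact upd_a d b σ _ _
    · rintro d ⟨rfl, -⟩; exact upd_b a d hab σ _ _
    · exact congrArg₂ (F 1) (upd_a a b σ _ _) (upd_b a b hab σ _ _)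

end OcProof

/-- **Oc is not definable in Coalition Logic.** No CL-formula is equivalent to
`Oc({a};{b})(p▷q)` over all concurrent game models; in particular there are
CL-bisimilar states distinguished by that formula. -/
theorem oc_not_definable_in_CL {Agt Prp : Type} [Finite Agt]
    (a b c : Agt) (hab : a ≠ b) (hac : a ≠ c) (hbc : b ≠ c)
    (p q : Prp) (hpq : p ≠ q) :
    (¬ ∃ χ : CLForm Agt Prp, ∀ (M : CGM Agt Prp) (s : M.State),
        M.satCL χ s ↔ M.sat (.oc {a} {b} (.atom p) (.atom q)) s) ∧
    (∃ (M : CGM Agt Prp) (R : M.State → M.State → Prop) (s1 s2 : M.State),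
        M.CLBisim R ∧ R s1 s2 ∧
        M.sat (.oc {a} {b} (.atom p) (.atom q)) s1 ∧
        ¬ M.sat (.oc {a} {b} (.atom p) (.atom q)) s2) := by
  have hR : OcProof.R 0 1 := by decide
  refine ⟨?_, OcProof.Mod a b p q, OcProof.R, (0 : Fin 5), (1 : Fin 5),
    OcProof.bisim a b hab p q, hR, OcProof.oc_true a b hab p q,
    OcProof.oc_false a b hab p q hpq⟩
  rintro ⟨χ, h⟩
  have h0 := (h (OcProof.Mod a b p q) (0 : Fin 5)).2 (OcProof.oc_true a b hab p q)
  exact OcProof.oc_false a b hab p q hpq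
    ((h (OcProof.Mod a b p q) (1 : Fin 5)).1 ((OcProof.inv a b hab p q χ 0 1 hR).1 h0))
end

section
/- (The observer-conditional operator is not definable in Coalition Logic) Let Agt contain two distinct agents a, b and let p, q be distinct atomic propositions. Then there is no CL-formula χ such that for every concurrent game model M over Agt and every state s of M: M, s ⊨ χ if and only if M, s ⊨ Oβ({a};∅)(p▷q), where M,s ⊨ Oβ({a};∅)(p▷q) iff every joint action σ_a of {a} at s satisfying M,u ⊨ p for all u ∈ Out[s,σ_a] also satisfies M,u ⊨ q for all u ∈ Out[s,σ_a]. In particular, there exist a concurrent game model and two CL-bisimilar states of it such that Oβ({a};∅)(p▷q) is true at one and false at the other. -/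
namespace ObsProof

/-- Invariance of CL-formulas under symmetric CL-bisimulations. -/
theorem invariance {Agt Prp : Type} (M : CGM Agt Prp) (R : M.State → M.State → Prop)
    (hR : M.CLBisim R) (φ : CLForm Agt Prp) (hs : ∀ u v, R u v → R v u) :
    ∀ s t, R s t → (M.satCL φ s ↔ M.satCL φ t) := by
  induction φ with
  | atom r => intro s t h; exact (hR s t h).1 r
  | tru => intro s t _; simp [CGM.satCL]
  | neg φ ih => intro s t h; simp only [CGM.satCL]; rw [ih s t h]
  | conj φ ψ ih1 ih2 => intro s t h; simp only [CGM.satCL]; rw [ih1 s t h, ih2 s t h]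
  | coal C φ ih =>
    have key : ∀ s t, R s t → M.satCL (.coal C φ) s → M.satCL (.coal C φ) t := by
      rintro s t h ⟨σ, h1, h2⟩
      obtain ⟨σ', h3, h4⟩ := ((hR s t h).2 C).1 σ h1
      refine ⟨σ', h3, fun u hu => ?_⟩
      obtain ⟨v, hv, hvu⟩ := h4 u hu
      exact (ih v u hvu).1 (h2 v hv)
    intro s t h
    exact ⟨key s t h, key t s (hs s t h)⟩

/-- Outcome functions, depending on the actions of `a` and `b`. -/
def f (s x y : Fin 5) : Fin 5 :=
  if s = 3 then (if x = 0 then 0 else y)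
  else if s = 4 then (if x = 0 then 0 else if x = 1 then y else if y = 1 then 1 else 0)
  else s

/-- Collapse to three actions. -/
def c (x : Fin 3) : Fin 5 := x.castLE (by omega)

/-- The countermodel. -/
def model {Agt Prp : Type} (a b : Agt) (p q : Prp) : CGM Agt Prp where
  State := Fin 5
  state_ne := ⟨0⟩
  Act := fun _ => Fin 3
  act_ne := fun _ => ⟨0⟩
  avail := fun _ _ => Set.univ
  avail_ne := fun _ _ => Set.univ_nonempty
  out := fun s τ => f s (c (τ a)) (c (τ b))
  val := fun r => {u | (r = p ∧ (u = 0 ∨ u = 1)) ∨ (r = q ∧ u = 0)}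

/-- The bisimulation. -/
def rel (u v : Fin 5) : Prop := u = v ∨ (u = 3 ∧ v = 4) ∨ (u = 4 ∧ v = 3)

section
variable {Agt Prp : Type} {a b : Agt} {p q : Prp}

/-- Outcome sets of the countermodel in plain terms. -/
def outs (a b : Agt) (s : Fin 5) (C : Set Agt) (σ : Agt → Fin 3) : Set (Fin 5) :=
  {u | ∃ τ : Agt → Fin 3, (∀ i ∈ C, τ i = σ i) ∧ f s (c (τ a)) (c (τ b)) = u}

theorem Outs_eq (s : Fin 5) (C : Set Agt) (σ : Agt → Fin 3) :
    (model a b p q).Outs s C σ = outs a b s C σ := by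
  apply Set.ext
  intro u
  constructor
  · rintro ⟨τ, -, h1, h2⟩
    exact ⟨τ, h1, h2⟩
  · rintro ⟨τ, h1, h2⟩
    exact ⟨τ, fun _ => trivial, h1, h2⟩

theorem mem_val (r : Prp) (u : Fin 5) : (model a b p q).sat (.atom r) u ↔
    ((r = p ∧ (u = 0 ∨ u = 1)) ∨ (r = q ∧ u = 0)) := Iff.rfl

theorem fwd34 (hab : a ≠ b) (C : Set Agt) (σ : Agt → Fin 3) :
    ∃ σ' : Agt → Fin 3, outs a b (4 : Fin 5) C σ' ⊆
      outs a b (3 : Fin 5) C σ := by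
  classical
  refine ⟨Function.update σ a (if σ a = 2 then 1 else σ a), ?_⟩
  rintro u ⟨τ, h, rfl⟩
  by_cases ha : a ∈ C
  · refine ⟨Function.update τ a (σ a), ?_, ?_⟩
    · intro i hi
      by_cases e : i = a
      · subst e; simp
      · have := h i hi
        simpa [e] using this
    · have := h a ha
      simp only [Function.update_self] at this
      simp only [Function.update_self, Function.update_of_ne hab.symm]
      rw [this]
      generalize σ a = x
      generalize τ b = y
      revert x y; decide
  · have key : ∀ x y : Fin 3, ∃ x' : Fin 3, f 3 (c x') (c y) = f 4 (c x) (c y) := by decide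
    obtain ⟨x', hx'⟩ := key (τ a) (τ b)
    refine ⟨Function.update τ a x', ?_, ?_⟩
    · intro i hi
      have e : i ≠ a := fun e => ha (e ▸ hi)
      have := h i hi
      simpa [e] using this
    · simpa only [Function.update_self, Function.update_of_ne hab.symm] using hx'

theorem fwd43 (hab : a ≠ b) (C : Set Agt) (σ : Agt → Fin 3) :
    ∃ σ' : Agt → Fin 3, outs a b (3 : Fin 5) C σ' ⊆
      outs a b (4 : Fin 5) C σ := by
  classical
  by_cases ha : a ∈ C
  · refine ⟨Function.update σ a (if σ a = 2 ∧ ¬ (b ∈ C ∧ σ b = 1) then 0 else σ a), ?_⟩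
    rintro u ⟨τ, h, rfl⟩
    have h1 := h a ha
    simp only [Function.update_self] at h1
    by_cases hb : b ∈ C
    · have h2 := h b hb
      simp only [Function.update_of_ne hab.symm] at h2
      refine ⟨Function.update τ a (σ a), ?_, ?_⟩
      · intro i hi
        by_cases e : i = a
        · subst e; simp
        · have := h i hi
          simpa [e] using this
      · simp only [Function.update_self, Function.update_of_ne hab.symm]
        rw [h1, h2]
        simp only [hb, true_and]
        generalize σ a = x
        generalize σ b = y
        revert x y; decide
    · have key : ∀ x y : Fin 3, ∃ y' : Fin 3,
          f 4 (c x) (c y') = f 3 (c (if x = 2 then 0 else x)) (c y) := by decide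
      obtain ⟨y', hy'⟩ := key (σ a) (τ b)
      refine ⟨Function.update (Function.update τ a (σ a)) b y', ?_, ?_⟩
      · intro i hi
        have e' : i ≠ b := fun e => hb (e ▸ hi)
        by_cases e : i = a
        · subst e; simp [hab]
        · have := h i hi
          simpa [e, e'] using this
      · simp only [hb, false_and, not_false_eq_true, and_true] at h1
        simp only [Function.update_self, Function.update_of_ne hab]
        rw [h1, hy']
  · refine ⟨σ, ?_⟩
    rintro u ⟨τ, h, rfl⟩
    have key : ∀ x y : Fin 3, ∃ x' : Fin 3, f 4 (c x') (c y) = f 3 (c x) (c y) := by decide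
    obtain ⟨x', hx'⟩ := key (τ a) (τ b)
    refine ⟨Function.update τ a x', ?_, ?_⟩
    · intro i hi
      have e : i ≠ a := fun e => ha (e ▸ hi)
      have := h i hi
      simpa [e] using this
    · simpa only [Function.update_self, Function.update_of_ne hab.symm] using hx'

theorem rel_symm (u v : Fin 5) (h : rel u v) : rel v u := by
  unfold rel at *; tauto

theorem fwd (hab : a ≠ b) (s t : Fin 5) (h : rel s t) (C : Set Agt) (σ : Agt → Fin 3) :
    ∃ σ' : Agt → Fin 3, outs a b t C σ' ⊆ outs a b s C σ := by
  rcases h with rfl | ⟨rfl, rfl⟩ | ⟨rfl, rfl⟩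
  · exact ⟨σ, subset_rfl⟩
  · exact fwd34 hab C σ
  · exact fwd43 hab C σ

theorem bisim (hab : a ≠ b) : (model a b p q).CLBisim rel := by
  intro s t h
  refine ⟨fun r => ?_, fun C => ⟨fun σ _ => ?_, fun σ _ => ?_⟩⟩
  · rcases h with h | ⟨h, h'⟩ | ⟨h, h'⟩
    · rw [h]
    · subst h; subst h'
      exact (mem_val r 3).trans (Iff.trans (by simp) (mem_val r 4).symm)
    · subst h; subst h'
      exact (mem_val r 4).trans (Iff.trans (by simp) (mem_val r 3).symm)
  · obtain ⟨σ', h'⟩ := fwd hab s t h C σ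
    refine ⟨σ', fun _ _ => trivial, fun u hu => ⟨u, ?_, Or.inl rfl⟩⟩
    erw [Outs_eq] at hu ⊢
    exact h' hu
  · obtain ⟨σ', h'⟩ := fwd hab t s (rel_symm s t h) C σ
    refine ⟨σ', fun _ _ => trivial, fun u hu => ⟨u, ?_, Or.inl rfl⟩⟩
    erw [Outs_eq] at hu ⊢
    exact h' hu

theorem sat3 (hab : a ≠ b) (hpq : p ≠ q) :
    (model a b p q).sat (.ob {a} (∅ : Set Agt) (.atom p) (.atom q)) (3 : Fin 5) := by
  classical
  intro σ _ h
  change Agt → Fin 3 at σ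
  have h0 : σ a = 0 := by
    have hm : f 3 (c (σ a)) (c 2) ∈ outs a b 3 {a} σ := by
      refine ⟨Function.update σ b 2, ?_, ?_⟩
      · intro i hi
        obtain rfl : i = a := hi
        simp [hab]
      · simp only [Function.update_self, Function.update_of_ne hab]
    have := (mem_val _ _).1 (h (f 3 (c (σ a)) (c 2)) (by rw [Outs_eq]; exact hm))
    simp only [hpq, true_and, false_and, or_false] at this
    revert this
    generalize σ a = x
    revert x; decide
  refine ⟨σ, fun _ _ => trivial, ?_⟩
  rintro u ⟨τ, -, h1, -, rfl⟩
  have h2 : τ a = σ a := h1 a rfl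
  refine Or.inr ⟨rfl, ?_⟩
  change f 3 (c (τ a)) (c (τ b)) = 0
  rw [h2, h0]
  simp [f, c]

theorem nsat4 (hab : a ≠ b) (hpq : p ≠ q) :
    ¬ (model a b p q).sat (.ob {a} (∅ : Set Agt) (.atom p) (.atom q)) (4 : Fin 5) := by
  classical
  intro h
  obtain ⟨σ, -, h⟩ := h (fun _ => (2 : Fin 3)) (fun _ _ => trivial) (by
    rintro u ⟨τ, -, h1, rfl⟩
    change Agt → Fin 3 at τ
    have h2 : τ a = 2 := h1 a rfl
    refine Or.inl ⟨rfl, ?_⟩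
    change f 4 (c (τ a)) (c (τ b)) = 0 ∨ f 4 (c (τ a)) (c (τ b)) = 1
    rw [h2]
    generalize τ b = y
    revert y; decide)
  let τ : Agt → Fin 3 := Function.update (fun _ => (2 : Fin 3)) b 1
  have ha : τ a = 2 := by simp [τ, hab]
  have hb : τ b = 1 := by simp [τ]
  have := (mem_val _ _).1 (h (1 : Fin 5) ⟨τ, fun _ => trivial, by
      intro i hi
      obtain rfl : i = a := hi
      exact ha, fun i hi => absurd hi.1 (Set.notMem_empty i), by
      change f 4 (c (τ a)) (c (τ b)) = 1
      rw [ha, hb]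
      decide⟩)
  simp [hpq.symm] at this

end

end ObsProof

/-- **The observer-conditional operator `Oβ({a};∅)(p▷q)` is not definable in
Coalition Logic.** -/
theorem observer_conditional_not_definable_in_CL {Agt Prp : Type} [Finite Agt]
    (a b : Agt) (hab : a ≠ b) (p q : Prp) (hpq : p ≠ q) :
    (¬ ∃ χ : CLForm Agt Prp, ∀ (M : CGM Agt Prp) (s : M.State),
        M.satCL χ s ↔ M.sat (.ob {a} (∅ : Set Agt) (.atom p) (.atom q)) s) ∧
    (∃ (M : CGM Agt Prp) (R : M.State → M.State → Prop) (s1 s2 : M.State),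
        M.CLBisim R ∧ R s1 s2 ∧
        M.sat (.ob {a} (∅ : Set Agt) (.atom p) (.atom q)) s1 ∧
        ¬ M.sat (.ob {a} (∅ : Set Agt) (.atom p) (.atom q)) s2) := by
  refine ⟨?_, ObsProof.model a b p q, ObsProof.rel, (3 : Fin 5), (4 : Fin 5),
    ObsProof.bisim hab, Or.inr (Or.inl ⟨rfl, rfl⟩), ObsProof.sat3 hab hpq,
    ObsProof.nsat4 hab hpq⟩
  rintro ⟨χ, h⟩
  have inv := ObsProof.invariance (ObsProof.model a b p q) ObsProof.rel (ObsProof.bisim hab) χ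
    ObsProof.rel_symm (3 : Fin 5) (4 : Fin 5) (Or.inr (Or.inl ⟨rfl, rfl⟩))
  exact ObsProof.nsat4 hab hpq ((h _ _).1 (inv.1 ((h _ _).2 (ObsProof.sat3 hab hpq))))
end

section
/- (Oα is not definable in Coalition Logic) Let Agt contain three distinct agents a, b, c and let p, q be distinct atomic propositions. Then there is no CL-formula χ such that for every concurrent game model M over Agt and every state s of M: M, s ⊨ χ if and only if M, s ⊨ Oα({b};{a})(q▷p). In particular, there exist a concurrent game model and two CL-bisimilar states of it such that Oα({b};{a})(q▷p) is true at one and false at the other. -/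
namespace OAlphaProof

/-- Outcome in the core three-player game. -/
def g (x y z : Fin 3) : Fin 5 :=
  if y = 2 then (if z = 0 then 0 else if z = 1 then 1 else 2)
  else if x = y then 0 else if z = 0 then 0 else 1

/-- Availability for the players a, b: action 1 is only available in the full game. -/
def av (f : Bool) (x : Fin 3) : Prop := f = true ∨ x ≠ 1

instance (f : Bool) (x : Fin 3) : Decidable (av f x) :=
  inferInstanceAs (Decidable (f = true ∨ x ≠ 1))

/-- Moves of a player: those outside the coalition are normalised to 0. -/
def mv (i f : Bool) (x : Fin 3) : Prop := if i = true then av f x else x = 0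

instance (i f : Bool) (x : Fin 3) : Decidable (mv i f x) :=
  inferInstanceAs (Decidable (if i = true then av f x else x = 0))

set_option maxRecDepth 100000 in
set_option synthInstance.maxSize 100000 in
set_option synthInstance.maxHeartbeats 1000000 in
set_option maxHeartbeats 2000000 in
theorem core_aux : ∀ f1 ia ib ic : Bool, ∀ x, mv ia f1 x → ∀ y, mv ib f1 y → ∀ z, mv ic true z →
    ∃ x', mv ia (!f1) x' ∧ ∃ y', mv ib (!f1) y' ∧ ∃ z', mv ic true z' ∧
      ∀ u, av (!f1) u → (ia = true → u = x') → ∀ v, av (!f1) v → (ib = true → v = y') →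
        ∀ w, (ic = true → w = z') →
        ∃ u', av f1 u' ∧ (ia = true → u' = x) ∧ ∃ v', av f1 v' ∧ (ib = true → v' = y) ∧
          ∃ w', (ic = true → w' = z) ∧ g u' v' w' = g u v w := by
  decide +kernel

theorem mv_norm (i f : Bool) (x : Fin 3) (h : i = true → av f x) :
    mv i f (if i = true then x else 0) := by
  unfold mv
  by_cases hi : i = true
  · simpa [hi] using h hi
  · simp [hi]

theorem mv_av {i f : Bool} {x : Fin 3} (h : mv i f x) (hi : i = true) : av f x := by
  simpa [mv, hi] using h

theorem core (f1 f2 ia ib ic : Bool) (x y z : Fin 3)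
    (hx : ia = true → av f1 x) (hy : ib = true → av f1 y) :
    ∃ x' y' z' : Fin 3, (ia = true → av f2 x') ∧ (ib = true → av f2 y') ∧
      ∀ u, av f2 u → (ia = true → u = x') → ∀ v, av f2 v → (ib = true → v = y') →
        ∀ w, (ic = true → w = z') →
        ∃ u', av f1 u' ∧ (ia = true → u' = x) ∧ ∃ v', av f1 v' ∧ (ib = true → v' = y) ∧
          ∃ w', (ic = true → w' = z) ∧ g u' v' w' = g u v w := by
  by_cases hf : f1 = f2
  · subst hf
    exact ⟨x, y, z, hx, hy, fun u hu hu' v hv hv' w hw => ⟨u, hu, hu', v, hv, hv', w, hw, rfl⟩⟩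
  · obtain rfl : f2 = !f1 := by cases f1 <;> cases f2 <;> simp_all
    obtain ⟨x', hx', y', hy', z', _, H⟩ := core_aux f1 ia ib ic _ (mv_norm ia f1 x hx)
      _ (mv_norm ib f1 y hy) _ (mv_norm ic true z (fun _ => Or.inl rfl))
    refine ⟨x', y', z', mv_av hx', mv_av hy', fun u hu hu' v hv hv' w hw => ?_⟩
    obtain ⟨u1, h1, h2, v1, h3, h4, w1, h5, h6⟩ := H u hu hu' v hv hv' w hw
    exact ⟨u1, h1, fun h => by simpa [h] using h2 h, v1, h3, fun h => by simpa [h] using h4 h,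
      w1, fun h => by simpa [h] using h5 h, h6⟩

open Classical in
/-- The separating model. -/
noncomputable def Mod {Agt Prp : Type} (a b c : Agt) (p q : Prp) : CGM Agt Prp where
  State := Fin 5
  state_ne := ⟨0⟩
  Act := fun _ => Fin 3
  act_ne := fun _ => ⟨0⟩
  avail := fun s d => {x | d = a ∨ d = b → av (decide (s ≠ 3)) x}
  avail_ne := fun s d => ⟨0, fun _ => Or.inr (by decide)⟩
  out := fun s σ => if 3 ≤ s then g (σ a) (σ b) (σ c) else s
  val := fun r => {s | (r = p ∧ s = 0) ∨ (r = q ∧ (s = 0 ∨ s = 1))}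

/-- The bisimulation. -/
def Rel (x y : Fin 5) : Prop := x = y ∨ (3 ≤ x ∧ 3 ≤ y)

theorem rel_symm {x y : Fin 5} (h : Rel x y) : Rel y x := by
  unfold Rel at *; tauto

theorem forth {Agt Prp : Type} (a b c : Agt) (hab : a ≠ b) (hac : a ≠ c) (hbc : b ≠ c)
    (p q : Prp) (s1 s2 : Fin 5) (h : Rel s1 s2) (C : Set Agt) (σ1 : Agt → Fin 3)
    (h1 : (Mod a b c p q).JointAt C s1 σ1) :
    ∃ σ2 : Agt → Fin 3, (Mod a b c p q).JointAt C s2 σ2 ∧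
      ∀ u2 ∈ (Mod a b c p q).Outs s2 C σ2, ∃ u1 ∈ (Mod a b c p q).Outs s1 C σ1, Rel u1 u2 := by
  classical
  rcases h with rfl | ⟨h3, h4⟩
  · exact ⟨σ1, h1, fun u hu => ⟨u, hu, Or.inl rfl⟩⟩
  obtain ⟨x', y', z', hx, hy, H⟩ := core (decide (s1 ≠ 3)) (decide (s2 ≠ 3))
    (decide (a ∈ C)) (decide (b ∈ C)) (decide (c ∈ C)) (σ1 a) (σ1 b) (σ1 c)
    (fun ha => h1 a (of_decide_eq_true ha) (Or.inl rfl))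
    (fun hb => h1 b (of_decide_eq_true hb) (Or.inr rfl))
  simp only [decide_eq_true_eq] at hx hy H
  refine ⟨fun d => if d = a then x' else if d = b then y' else if d = c then z' else σ1 d, ?_, ?_⟩
  · intro d hd hd'
    rcases hd' with rfl | rfl
    · simpa using hx hd
    · simpa [hab.symm] using hy hd
  · rintro _ ⟨τ, hτ, hC, rfl⟩
    obtain ⟨u', hu, hu1, v', hv, hv1, w', hw, hg⟩ := H (τ a) (hτ a (Or.inl rfl))
      (fun ha => (hC a ha).trans (by simp; rfl)) (τ b) (hτ b (Or.inr rfl))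
      (fun hb => (hC b hb).trans (by simp [hab.symm]; rfl)) (τ c)
      (fun hc => (hC c hc).trans (by simp [hac.symm, hbc.symm]; rfl))
    refine ⟨_, ⟨fun d => if d = a then u' else if d = b then v' else if d = c then w' else τ d,
      ?_, ?_, rfl⟩, ?_⟩
    · intro d hd'
      rcases hd' with rfl | rfl
      · simpa using hu
      · simpa [hab.symm] using hv
    · intro d hd
      have := hC d hd
      by_cases e1 : d = a
      · subst e1; simp; exact hu1 hd
      by_cases e2 : d = b
      · subst e2; simp [hab.symm]; exact hv1 hd
      by_cases e3 : d = c
      · subst e3; simp [hac.symm, hbc.symm]; exact hw hd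
      simpa [e1, e2, e3] using this
    · left
      simp only [Mod, h3, h4, if_true, hab.symm, hac.symm, hbc.symm, if_false]
      exact hg

theorem bisim {Agt Prp : Type} (a b c : Agt) (hab : a ≠ b) (hac : a ≠ c) (hbc : b ≠ c)
    (p q : Prp) : (Mod a b c p q).CLBisim Rel := by
  intro s1 s2 h
  refine ⟨?_, fun C => ⟨forth a b c hab hac hbc p q s1 s2 h C,
    forth a b c hab hac hbc p q s2 s1 (rel_symm h) C⟩⟩
  intro r
  rcases h with rfl | ⟨h3, h4⟩
  · rfl
  · have k : ∀ s : Fin 5, 3 ≤ s → s ≠ 0 ∧ s ≠ 1 := by decide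
    have k1 := k s1 h3
    have k2 := k s2 h4
    show ((r = p ∧ s1 = (0 : Fin 5)) ∨ (r = q ∧ (s1 = (0 : Fin 5) ∨ s1 = (1 : Fin 5)))) ↔
      ((r = p ∧ s2 = (0 : Fin 5)) ∨ (r = q ∧ (s2 = (0 : Fin 5) ∨ s2 = (1 : Fin 5))))
    tauto

theorem invariant {Agt Prp : Type} (M : CGM Agt Prp) (R : M.State → M.State → Prop)
    (hs : ∀ x y, R x y → R y x) (hR : M.CLBisim R) (χ : CLForm Agt Prp) :
    ∀ s1 s2, R s1 s2 → (M.satCL χ s1 ↔ M.satCL χ s2) := by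
  induction χ with
  | atom r => exact fun s1 s2 h => (hR s1 s2 h).1 r
  | tru => exact fun _ _ _ => Iff.rfl
  | neg φ ih => exact fun s1 s2 h => not_congr (ih s1 s2 h)
  | conj φ ψ ih1 ih2 => exact fun s1 s2 h => and_congr (ih1 s1 s2 h) (ih2 s1 s2 h)
  | coal C φ ih =>
    have key : ∀ s1 s2, R s1 s2 → M.satCL (.coal C φ) s1 → M.satCL (.coal C φ) s2 := by
      rintro s1 s2 h ⟨σ, hσ, H⟩
      obtain ⟨σ2, h2, H2⟩ := ((hR s1 s2 h).2 C).1 σ hσ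
      refine ⟨σ2, h2, fun u hu => ?_⟩
      obtain ⟨u1, hu1, hr⟩ := H2 u hu
      exact (ih _ _ hr).1 (H u1 hu1)
    exact fun s1 s2 h => ⟨key s1 s2 h, key s2 s1 (hs _ _ h)⟩

theorem sat_three {Agt Prp : Type} (a b c : Agt) (hab : a ≠ b) (hac : a ≠ c) (hbc : b ≠ c)
    (p q : Prp) (hpq : p ≠ q) :
    (Mod a b c p q).sat (.oa {b} {a} (.atom q) (.atom p)) (3 : Fin 5) := by
  classical
  refine ⟨fun _ => (0 : Fin 3), fun _ _ _ => Or.inr (show (0 : Fin 3) ≠ 1 by decide), ?_⟩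
  rintro σ hσ hq _ ⟨τ, hτ, hb, ha, rfl⟩
  have hb' : τ b = σ b := hb b rfl
  have ha' : τ a = (0 : Fin 3) := ha a ⟨rfl, hab⟩
  have hav : av false (τ b) := hτ b (Or.inr rfl)
  have h0 : τ b = (0 : Fin 3) := by
    have k : ∀ t : Fin 3, av false t → t ≠ 2 → t = 0 := by decide
    refine k _ hav fun h2 => ?_
    have := hq (2 : Fin 5) ⟨fun d => if d = b then (2 : Fin 3) else if d = c then (2 : Fin 3)
      else (0 : Fin 3), ?_, ?_, ?_⟩
    · have h' : ((q = p ∧ (2 : Fin 5) = 0) ∨ (q = q ∧ ((2 : Fin 5) = 0 ∨ (2 : Fin 5) = 1))) := this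
      revert h'; simp
    · intro d _
      right
      show (if d = b then (2 : Fin 3) else if d = c then (2 : Fin 3) else (0 : Fin 3)) ≠ 1
      split_ifs <;> decide
    · rintro d rfl
      rw [← hb']; simp; exact h2.symm
    · simp [Mod, g, hbc.symm]
  left
  refine ⟨rfl, ?_⟩
  show (if (3 : Fin 5) ≤ 3 then g (τ a) (τ b) (τ c) else 3) = 0
  rw [ha', h0]
  generalize τ c = z
  revert z
  change ∀ z : Fin 3, _
  decide

theorem not_sat_four {Agt Prp : Type} (a b c : Agt) (hab : a ≠ b) (hac : a ≠ c) (hbc : b ≠ c)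
    (p q : Prp) (hpq : p ≠ q) :
    ¬ (Mod a b c p q).sat (.oa {b} {a} (.atom q) (.atom p)) (4 : Fin 5) := by
  classical
  rintro ⟨σ, hσ, H⟩
  have hav : ∀ (d : Agt) (x : Fin 3), x ∈ (Mod a b c p q).avail (4 : Fin 5) d :=
    fun _ _ _ => Or.inl (by decide)
  obtain ⟨y, hy2, hy⟩ : ∃ y : Fin 3, y ≠ 2 ∧ σ a ≠ y := by
    have k : ∀ t : Fin 3, ∃ y : Fin 3, y ≠ 2 ∧ t ≠ y := by decide
    exact k (σ a)
  have := H (fun _ => y) (fun d _ => hav d y) ?_ (1 : Fin 5)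
    ⟨fun d => if d = a then σ a else if d = b then y else (1 : Fin 3), fun d => hav d _, ?_, ?_, ?_⟩
  · have h' : ((p = p ∧ (1 : Fin 5) = 0) ∨ (p = q ∧ ((1 : Fin 5) = 0 ∨ (1 : Fin 5) = 1))) := this
    simp [hpq] at h'
  · rintro _ ⟨τ, _, hb, rfl⟩
    have hb' : τ b = y := hb b rfl
    right
    refine ⟨rfl, ?_⟩
    have k : ∀ x y z : Fin 3, y ≠ 2 → (g x y z = 0 ∨ g x y z = 1) := by decide
    have := k (τ a) (τ b) (τ c) (by rw [hb']; exact hy2)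
    exact this
  · rintro d rfl
    simp [hab.symm]; rfl
  · rintro d ⟨rfl, _⟩
    simp
  · have k : ∀ x y : Fin 3, y ≠ 2 → x ≠ y → g x y 1 = 1 := by decide
    simp only [Mod, hab.symm, hac.symm, hbc.symm, if_true, if_false]
    exact k _ _ hy2 hy

end OAlphaProof

/-- **Oα is not definable in Coalition Logic.** No CL-formula is equivalent to
`Oα({b};{a})(q▷p)` over all concurrent game models; in particular there are
CL-bisimilar states distinguished by that formula. -/
theorem oalpha_not_definable_in_CL {Agt Prp : Type} [Finite Agt]
    (a b c : Agt) (hab : a ≠ b) (hac : a ≠ c) (hbc : b ≠ c)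
    (p q : Prp) (hpq : p ≠ q) :
    (¬ ∃ χ : CLForm Agt Prp, ∀ (M : CGM Agt Prp) (s : M.State),
        M.satCL χ s ↔ M.sat (.oa {b} {a} (.atom q) (.atom p)) s) ∧
    (∃ (M : CGM Agt Prp) (R : M.State → M.State → Prop) (s1 s2 : M.State),
        M.CLBisim R ∧ R s1 s2 ∧
        M.sat (.oa {b} {a} (.atom q) (.atom p)) s1 ∧
        ¬ M.sat (.oa {b} {a} (.atom q) (.atom p)) s2) := by
  have hB := OAlphaProof.bisim a b c hab hac hbc p q
  have h3 := OAlphaProof.sat_three a b c hab hac hbc p q hpq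
  have h4 := OAlphaProof.not_sat_four a b c hab hac hbc p q hpq
  have hR : OAlphaProof.Rel 3 4 := Or.inr (by decide)
  refine ⟨?_, OAlphaProof.Mod a b c p q, OAlphaProof.Rel, (3 : Fin 5), (4 : Fin 5), hB, hR, h3, h4⟩
  rintro ⟨χ, hχ⟩
  exact h4 ((hχ _ _).1 ((OAlphaProof.invariant _ _ (fun _ _ h => OAlphaProof.rel_symm h) hB χ
    _ _ hR).1 ((hχ _ _).2 h3)))
end

section
/- (Validity of anti-monotonicity for Oα) For all coalitions A, B, C ⊆ Agt and all ConStR-formulas φ, ψ, the formula Oα(A∪C;B)(φ▷ψ) → Oα(A;B)(φ▷ψ) is valid: for every concurrent game model M and every state s, if M, s ⊨ Oα(A∪C;B)(φ▷ψ) then M, s ⊨ Oα(A;B)(φ▷ψ). -/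
/-- **Validity of anti-monotonicity for Oα:**
`Oα(A∪C;B)(φ▷ψ) → Oα(A;B)(φ▷ψ)` is valid. -/
theorem oalpha_antimonotonicity_valid {Agt Prp : Type} [Finite Agt]
    (A B C : Set Agt) (φ ψ : ConStR Agt Prp)
    (M : CGM Agt Prp) (s : M.State)
    (h : M.sat (.oa (A ∪ C) B φ ψ) s) :
    M.sat (.oa A B φ ψ) s := by
  simp only [CGM.sat] at h ⊢
  obtain ⟨σB, hB, h⟩ := h
  refine ⟨σB, hB, ?_⟩
  rintro σA - hφ u ⟨τ, hτ, hA, hBA, rfl⟩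
  refine h τ (fun a _ => hτ a) ?_ _
    ⟨τ, hτ, fun _ _ => rfl, fun a ha => hBA a ⟨ha.1, fun h' => ha.2 (Or.inl h')⟩, rfl⟩
  rintro v ⟨ρ, hρ, hρτ, rfl⟩
  exact hφ _ ⟨ρ, hρ, fun a ha => (hρτ a (Or.inl ha)).trans (hA a ha), rfl⟩
end

section
/- (Anti-monotonicity fails for Oβ) Let Agt contain three distinct agents a, b, c and let p, q be distinct atomic propositions. Then the formula Oβ({a,c};{b})(p▷q) → Oβ({a};{b})(p▷q) is not valid: there exist a concurrent game model M over Agt and a state s0 of M such that M, s0 ⊨ Oβ({a,c};{b})(p▷q) and M, s0 ⊭ Oβ({a};{b})(p▷q). -/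
/-- **Anti-monotonicity fails for Oβ:** the formula
`Oβ({a,c};{b})(p▷q) → Oβ({a};{b})(p▷q)` is not valid. -/
theorem obeta_antimonotonicity_not_valid {Agt Prp : Type} [Finite Agt]
    (a b c : Agt) (hab : a ≠ b) (hac : a ≠ c) (hbc : b ≠ c)
    (p q : Prp) (hpq : p ≠ q) :
    ∃ (M : CGM Agt Prp) (s0 : M.State),
      M.sat (.ob {a, c} {b} (.atom p) (.atom q)) s0 ∧
      ¬ M.sat (.ob {a} {b} (.atom p) (.atom q)) s0 := by
  classical
  refine ⟨{ State := Bool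
            state_ne := ⟨true⟩
            Act := fun _ => Bool
            act_ne := fun _ => ⟨true⟩
            avail := fun _ _ => Set.univ
            avail_ne := fun _ _ => ⟨true, trivial⟩
            out := fun _ τ => τ b == τ c
            val := fun r => {s | r = p ∨ s = true} }, true, ?_, ?_⟩
  · -- `b` copies the action of `c`
    intro σA _ _
    refine ⟨fun _ => σA c, fun _ _ => trivial, ?_⟩
    rintro u ⟨τ, _, hA, hB, rfl⟩
    have h1 : τ c = σA c := hA c (by simp)
    have h2 : τ b = σA c := hB b ⟨rfl, by
      rintro (h | h)
      · exact hab h.symm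
      · exact hbc h⟩
    right
    show (τ b == τ c) = true
    rw [h1, h2]
    simp
  · -- `c` is free to differ from `b`
    intro h
    obtain ⟨σB, _, hB⟩ := h (fun _ => true) (fun _ _ => trivial) (fun _ _ => Or.inl rfl)
    have := hB (false) ⟨fun x => if x = a then true else if x = b then σB b else !(σB b),
      fun _ => trivial, ?_, ?_, ?_⟩
    · rcases this with h | h
      · exact hpq h.symm
      · exact Bool.noConfusion h
    · intro x hx
      have : x = a := hx
      simp [this]
    · rintro x ⟨hx, _⟩
      have : x = b := hx
      subst this
      simp [hab.symm]
    · simp [hab.symm, hac.symm, hbc.symm]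
end

section
/- (Soundness of axiom ConStR 2) For all coalitions A, B ⊆ Agt and all ConStR-formulas φ, ψ, the formula (Oβ(∅;A)(⊤▷φ) ∧ Oβ(A;B)(φ▷ψ)) → Oc(A;B)(φ▷ψ) is valid: at every state s of every concurrent game model M, if M, s ⊨ Oβ(∅;A)(⊤▷φ) and M, s ⊨ Oβ(A;B)(φ▷ψ), then M, s ⊨ Oc(A;B)(φ▷ψ). -/
/-- **Soundness of axiom ConStR 2:**
`(Oβ(∅;A)(⊤▷φ) ∧ Oβ(A;B)(φ▷ψ)) → Oc(A;B)(φ▷ψ)` is valid. -/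
theorem constr2_sound {Agt Prp : Type} [Finite Agt]
    (A B : Set Agt) (φ ψ : ConStR Agt Prp)
    (M : CGM Agt Prp) (s : M.State)
    (h1 : M.sat (.ob (∅ : Set Agt) A .tru φ) s)
    (h2 : M.sat (.ob A B φ ψ) s) :
    M.sat (.oc A B φ ψ) s := by
  simp only [CGM.sat] at h1 h2 ⊢
  obtain ⟨σA, hA, hφ⟩ := h1 (fun a => (M.act_ne a).some)
    (fun a ha => absurd ha (Set.notMem_empty a)) (fun _ _ => trivial)
  have hφ' : ∀ u ∈ M.Outs s A σA, M.sat φ u := by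
    rintro u ⟨τ, hτ, hτA, rfl⟩
    exact hφ _ ⟨τ, hτ, fun a ha => absurd ha (Set.notMem_empty a),
      fun a ha => hτA a ha.1, rfl⟩
  exact ⟨σA, hA, hφ', h2 σA hA hφ'⟩
end

section
/- (Soundness of axiom Oc 1: monotonicity of Oc with respect to the first coalition) For all coalitions A, B, C ⊆ Agt and all ConStR-formulas φ, ψ, the formula Oc(A;B)(φ▷ψ) → Oc(A∪C;B)(φ▷ψ) is valid. -/
/-- **Soundness of axiom Oc 1 (monotonicity w.r.t. the first coalition):**
`Oc(A;B)(φ▷ψ) → Oc(A∪C;B)(φ▷ψ)` is valid. -/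
theorem oc1_sound {Agt Prp : Type} [Finite Agt]
    (A B C : Set Agt) (φ ψ : ConStR Agt Prp)
    (M : CGM Agt Prp) (s : M.State)
    (h : M.sat (.oc A B φ ψ) s) :
    M.sat (.oc (A ∪ C) B φ ψ) s := by
  classical
  simp only [CGM.sat] at h ⊢
  obtain ⟨σA, hA, hφ, σB, hB, hψ⟩ := h
  let σ : ∀ a, M.Act a := fun a =>
    if a ∈ A then σA a else if a ∈ B then σB a else (M.avail_ne s a).choose
  have h1 : ∀ a ∈ A, σ a = σA a := fun a ha => by simp [σ, ha]
  have h2 : ∀ a, a ∉ A → a ∈ B → σ a = σB a := fun a ha hb => by simp [σ, ha, hb]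
  have h3 : ∀ a, σ a ∈ M.avail s a := by
    intro a
    by_cases ha : a ∈ A
    · rw [h1 a ha]; exact hA a ha
    · by_cases hb : a ∈ B
      · rw [h2 a ha hb]; exact hB a hb
      · simp only [σ, ha, hb, if_false]
        exact (M.avail_ne s a).choose_spec
  refine ⟨σ, fun a _ => h3 a, ?_, σB, hB, ?_⟩
  · rintro u ⟨τ, hτ, hτC, rfl⟩
    exact hφ _ ⟨τ, hτ, fun a ha => (hτC a (Or.inl ha)).trans (h1 a ha), rfl⟩
  · rintro u ⟨τ, hτ, hτC, hτB, rfl⟩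
    refine hψ _ ⟨τ, hτ, fun a ha => (hτC a (Or.inl ha)).trans (h1 a ha), ?_, rfl⟩
    rintro a ⟨hb, ha⟩
    by_cases hc : a ∈ A ∪ C
    · exact (hτC a hc).trans (h2 a ha hb)
    · exact hτB a ⟨hb, hc⟩
end

section
/- (Soundness of axiom Oc 3) For all coalitions A, B ⊆ Agt and all ConStR-formulas φ, ψ, the formula Oc(A;B)(φ▷ψ) → Oc(A∪B;∅)((φ∧ψ)▷⊤) is valid. -/
/-- **Soundness of axiom Oc 3:**
`Oc(A;B)(φ▷ψ) → Oc(A∪B;∅)((φ∧ψ)▷⊤)` is valid. -/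
theorem oc3_sound {Agt Prp : Type} [Finite Agt]
    (A B : Set Agt) (φ ψ : ConStR Agt Prp)
    (M : CGM Agt Prp) (s : M.State)
    (h : M.sat (.oc A B φ ψ) s) :
    M.sat (.oc (A ∪ B) (∅ : Set Agt) (.conj φ ψ) .tru) s := by
  classical
  simp only [CGM.sat] at h ⊢
  obtain ⟨σA, hA, hφ, σB, hB, hψ⟩ := h
  refine ⟨fun a => if a ∈ A then σA a else σB a, ?_, ?_, σA, ?_, fun _ _ => trivial⟩
  · intro a ha
    by_cases h : a ∈ A
    · simpa [h] using hA a h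
    · simpa [h] using hB a (ha.resolve_left h)
  · rintro u ⟨τ, hτ, hag, rfl⟩
    have h1 : ∀ a ∈ A, τ a = σA a := fun a ha => by
      simpa [ha] using hag a (Or.inl ha)
    have h2 : ∀ a ∈ B \ A, τ a = σB a := fun a ha => by
      simpa [ha.2] using hag a (Or.inr ha.1)
    exact ⟨hφ _ ⟨τ, hτ, h1, rfl⟩, hψ _ ⟨τ, hτ, h1, h2, rfl⟩⟩
  · intro a ha
    exact ha.elim
end

section
/- (Soundness of axiom Oc 6) For all coalitions A, B ⊆ Agt and all ConStR-formulas φ, ψ, the formula Oc(A;B)(φ▷ψ) ↔ Oc(A;B\A)(φ▷ψ) is valid: at every state s of every concurrent game model M, M, s ⊨ Oc(A;B)(φ▷ψ) if and only if M, s ⊨ Oc(A;B\A)(φ▷ψ). -/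
/-- **Soundness of axiom Oc 6:** `Oc(A;B)(φ▷ψ) ↔ Oc(A;B\A)(φ▷ψ)` is valid. -/
theorem oc6_sound {Agt Prp : Type} [Finite Agt]
    (A B : Set Agt) (φ ψ : ConStR Agt Prp)
    (M : CGM Agt Prp) (s : M.State) :
    M.sat (.oc A B φ ψ) s ↔ M.sat (.oc A (B \ A) φ ψ) s := by 
  classical
  have key : ∀ σA σB, M.OutsAB s A (B \ A) σA σB = M.OutsAB s A B σA σB := by
    intro σA σB
    simp [CGM.OutsAB]
  simp only [CGM.sat, key]
  constructor
  · rintro ⟨σA, hA, hφ, σB, hB, hψ⟩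
    exact ⟨σA, hA, hφ, σB, fun a ha => hB a ha.1, hψ⟩
  · rintro ⟨σA, hA, hφ, σB, hB, hψ⟩
    refine ⟨σA, hA, hφ, fun a => if a ∈ A then σA a else σB a, ?_, ?_⟩
    · intro a ha
      by_cases h : a ∈ A
      · simpa [h] using hA a h
      · simpa [h] using hB a ⟨ha, h⟩
    · rintro u ⟨τ, h1, h2, h3, h4⟩
      refine hψ u ⟨τ, h1, h2, fun a ha => ?_, h4⟩
      simpa [ha.2] using h3 a ha
end

section
/- (Soundness of axiom Oβ 4) For all coalitions A, B ⊆ Agt and every ConStR-formula φ, the formula Oβ(∅;A)(⊤▷φ) → ¬Oβ(A;B)(φ▷⊥) is valid: at every state s of every concurrent game model M, if M, s ⊨ Oβ(∅;A)(⊤▷φ) then M, s ⊭ Oβ(A;B)(φ▷⊥). -/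
/-- **Soundness of axiom Oβ 4:** `Oβ(∅;A)(⊤▷φ) → ¬ Oβ(A;B)(φ▷⊥)` is valid
(here `⊥ := ¬⊤`). -/
theorem ob4_sound {Agt Prp : Type} [Finite Agt]
    (A B : Set Agt) (φ : ConStR Agt Prp)
    (M : CGM Agt Prp) (s : M.State)
    (h : M.sat (.ob (∅ : Set Agt) A .tru φ) s) :
    ¬ M.sat (.ob A B φ (.neg .tru)) s := by
  classical
  intro h2
  simp only [CGM.sat] at h h2
  choose d hd using M.avail_ne s
  obtain ⟨σ, hσ, hφ⟩ := h d (fun a _ => hd a) (fun _ _ => trivial)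
  obtain ⟨ρ, hρ, hbot⟩ := h2 σ hσ (by
    rintro u ⟨τ, hτ, hA, rfl⟩
    exact hφ _ ⟨τ, hτ, fun a ha => ha.elim, fun a ha => hA a ha.1, rfl⟩)
  refine hbot (M.out s (fun a => if a ∈ A then σ a else if a ∈ B then ρ a else d a))
    ⟨_, ?_, ?_, ?_, rfl⟩ trivial
  · intro a
    by_cases hA : a ∈ A
    · simpa [hA] using hσ a hA
    · by_cases hB : a ∈ B
      · simpa [hA, hB] using hρ a hB
      · simpa [hA, hB] using hd a
  · intro a ha
    simp [ha]
  · intro a ha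
    simp [ha.1, ha.2]
end
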